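/- Let α > −1 and n ≥ 1, let ψ be analytic on 𝔻, not identically 0, and φ a nonconstant analytic self-map of 𝔻, and suppose D_{ψ,φ,n} is bounded and normal on A_α² (i.e. commutes with its adjoint). Then ψ^{(m)}(0) = 0 for every integer 0 ≤ m < n, ψ^{(n)}(0) ≠ 0, ψ(w) ≠ 0 for every w ∈ 𝔻 \ {0}, and φ is univalent on 𝔻. -/

import Mathlib

open Complex Metric Set

noncomputable section

/-- The open unit disk in `ℂ`. -/
def unitDisk : Set ℂ := Metric.ball 0 1

/-- `wb2 α j` is `β(j)² = j!·Γ(α+2)/Γ(j+α+2)`, the square of the norm of `z^j` in `A_α²`. -/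
def wb2 (α : ℝ) (j : ℕ) : ℝ :=
  (j.factorial : ℝ) * Real.Gamma (α + 2) / Real.Gamma ((j : ℝ) + α + 2)

/-- The `j`-th Taylor coefficient of `f` at `0`. -/
def tcoeff (f : ℂ → ℂ) (j : ℕ) : ℂ := iteratedDeriv j f 0 / (j.factorial : ℂ)

/-- An abstract model of the weighted Bergman space `A_α²`: a complex Hilbert space `H`
whose elements are (identified with) the analytic functions on the unit disk with
square-summable weighted Taylor coefficients, with the weighted `ℓ²` inner product. -/
structure BergmanModel (α : ℝ) (H : Type) [NormedAddCommGroup H]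
    [InnerProductSpace ℂ H] where
  emb : H →ₗ[ℂ] (ℂ → ℂ)
  analyticOn : ∀ f : H, AnalyticOnNhd ℂ (emb f) unitDisk
  summable_norm : ∀ f : H, Summable (fun j => ‖tcoeff (emb f) j‖ ^ 2 * wb2 α j)
  inj : ∀ f g : H, Set.EqOn (emb f) (emb g) unitDisk → f = g
  exists_rep : ∀ F : ℂ → ℂ, AnalyticOnNhd ℂ F unitDisk →
      Summable (fun j => ‖tcoeff F j‖ ^ 2 * wb2 α j) →
      ∃ f : H, Set.EqOn (emb f) F unitDisk
  inner_eq : ∀ f g : H,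
      (@inner ℂ H _ f g) =
        ∑' j : ℕ, (starRingEnd ℂ) (tcoeff (emb f) j) * tcoeff (emb g) j * (wb2 α j : ℂ)

/-- The derivative-evaluation kernel `K_w^{(m)}(z) = m!·z^m / (β(m)²·(1-conj(w)·z)^(m+α+2))`. -/
def kern (α : ℝ) (m : ℕ) (w z : ℂ) : ℂ :=
  (m.factorial : ℂ) * z ^ m /
    ((wb2 α m : ℂ) * (1 - (starRingEnd ℂ) w * z) ^ ((m : ℂ) + (α : ℂ) + 2))

/-!
Since `T = D_{ψ,φ,n}` is normal, `ker T = (range T)ᗮ`. By the identity theorem `ker T` consists of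
the polynomials of degree less than `n`. Orthogonality of `z ^ m`, `m < n`, to `T (z ^ n) = n! ψ`
makes the first `n` Taylor coefficients of `ψ` vanish. Conversely, a vector orthogonal to the range
has no Taylor coefficient of order `n` or more. For `w ≠ 0` the reproducing kernel `k_w` satisfies
`⟪k_w, T f⟫ = ψ w * f⁽ⁿ⁾(φ w)`; at `w = 0` its role is played by `z ^ n`, with a nonzero multiple of
`ψ⁽ⁿ⁾(0)` in place of `ψ w`. If this scalar vanished, the vector would be orthogonal to the range
although its `n`-th coefficient is nonzero. If `φ w₁ = φ w₂`, a combination of the vectors for `w₁`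
and `w₂` is orthogonal to the range, and its coefficients of orders `n` and `n + 1` give `w₁ = w₂`.
-/

section Preliminaries

theorem isOpen_unitDisk : IsOpen unitDisk := isOpen_ball

theorem isPreconnected_unitDisk : IsPreconnected unitDisk :=
  (convex_ball (0 : ℂ) 1).isPreconnected

theorem zero_mem_unitDisk : (0 : ℂ) ∈ unitDisk := mem_ball_self one_pos

theorem iteratedDeriv_fun_mul_of_forall_lt_eq_zero {𝕜 𝔸 : Type*} [NontriviallyNormedField 𝕜]
    [NormedRing 𝔸] [NormedAlgebra 𝕜 𝔸] {f g : 𝕜 → 𝔸} {x : 𝕜} {n : ℕ}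
    (hf : ContDiffAt 𝕜 n f x) (hg : ContDiffAt 𝕜 n g x)
    (hlow : ∀ m < n, iteratedDeriv m f x = 0) :
    iteratedDeriv n (fun z => f z * g z) x = iteratedDeriv n f x * g x := by
  rw [iteratedDeriv_fun_mul hf hg, Finset.sum_range_succ, Finset.sum_eq_zero]
  · simp
  · intro i hi
    simp [hlow i (Finset.mem_range.mp hi)]

theorem eqOn_iteratedDeriv_zero_of_le {𝕜 F : Type*} [NontriviallyNormedField 𝕜]
    [NormedAddCommGroup F] [NormedSpace 𝕜 F] {f : 𝕜 → F} {s : Set 𝕜} (hs : IsOpen s) {m n : ℕ}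
    (hmn : m ≤ n) (hf : EqOn (iteratedDeriv m f) 0 s) : EqOn (iteratedDeriv n f) 0 s := by
  induction n, hmn using Nat.le_induction with
  | base => exact hf
  | succ n _ ih =>
    intro z hz
    rw [iteratedDeriv_succ, ih.deriv hs hz]
    simp

theorem eqOn_zero_of_mul_comp_eq_zero {U V : Set ℂ} (hUo : IsOpen U) (hU : IsPreconnected U)
    (hV : IsPreconnected V) {ψ φ g : ℂ → ℂ} (hψ : AnalyticOnNhd ℂ ψ U)
    (hψ0 : ∃ z ∈ U, ψ z ≠ 0) (hφ : AnalyticOnNhd ℂ φ U) (hφUV : MapsTo φ U V)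
    (hφnc : ∃ z ∈ U, ∃ w ∈ U, φ z ≠ φ w) (hg : AnalyticOnNhd ℂ g V)
    (h : ∀ z ∈ U, ψ z * g (φ z) = 0) : EqOn g 0 V := by
  obtain ⟨a, haU, ha⟩ := hψ0
  have hgφ : ∀ z ∈ U, g (φ z) = 0 :=
    (hψ.eq_zero_or_eq_zero_of_mul_eq_zero (hg.comp hφ hφUV) h hU).resolve_left
      fun hψ => ha (hψ a haU)
  have hφU : IsOpen (φ '' U) := by
    refine (hφ.is_constant_or_isOpen hU).resolve_left ?_ U subset_rfl hUo
    rintro ⟨c, hc⟩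
    obtain ⟨z, hz, w, hw, hzw⟩ := hφnc
    exact hzw ((hc z hz).trans (hc w hw).symm)
  refine hg.eqOn_zero_of_preconnected_of_eventuallyEq_zero hV (hφUV haU) ?_
  filter_upwards [hφU.mem_nhds (mem_image_of_mem φ haU)]
  rintro _ ⟨z, hz, rfl⟩
  exact hgφ z hz

theorem tcoeff_congr {f g : ℂ → ℂ} (h : EqOn f g unitDisk) (j : ℕ) : tcoeff f j = tcoeff g j := by
  rw [tcoeff, tcoeff, h.iteratedDeriv_of_isOpen isOpen_unitDisk j zero_mem_unitDisk]

theorem tcoeff_eq_zero_iff {f : ℂ → ℂ} {j : ℕ} : tcoeff f j = 0 ↔ iteratedDeriv j f 0 = 0 := by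
  simp [tcoeff, Nat.factorial_ne_zero]

theorem tcoeff_pow (j k : ℕ) : tcoeff (fun z => z ^ j) k = if k = j then 1 else 0 := by
  rw [tcoeff, iteratedDeriv_fun_pow_zero]
  split_ifs with h
  · simp [h, Nat.factorial_ne_zero]
  · simp

theorem hasSum_tcoeff_mul_pow {f : ℂ → ℂ} (hf : AnalyticOnNhd ℂ f unitDisk) {w : ℂ}
    (hw : w ∈ unitDisk) : HasSum (fun j => tcoeff f j * w ^ j) (f w) := by
  refine (hasSum_taylorSeries_on_ball hf.differentiableOn hw).congr_fun fun j => ?_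
  simp only [tcoeff, sub_zero, smul_eq_mul]
  ring

end Preliminaries

section WeightedHardy

open Filter Topology
open scoped InnerProductSpace ComplexConjugate

/-- A weighted Hardy space `H²(β)`: a Hilbert space of analytic functions on the unit disk that
contains the monomials `z ^ j` and on which `f ↦ ⟪z ^ j, f⟫` is `β(j)²` times the `j`-th Taylor
coefficient. The weight is not a parameter: it is recovered as `β(j) = ‖z ^ j‖`. -/
structure WeightedHardyModel (H : Type*) [NormedAddCommGroup H] [InnerProductSpace ℂ H] where
  emb : H →ₗ[ℂ] (ℂ → ℂ)
  analyticOn : ∀ f : H, AnalyticOnNhd ℂ (emb f) unitDisk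
  inj : ∀ f g : H, EqOn (emb f) (emb g) unitDisk → f = g
  monomial : ℕ → H
  emb_monomial : ∀ j, EqOn (emb (monomial j)) (fun z => z ^ j) unitDisk
  inner_monomial : ∀ j f, ⟪monomial j, f⟫_ℂ = (‖monomial j‖ : ℂ) ^ 2 * tcoeff (emb f) j

namespace BergmanModel

variable {α : ℝ} {H : Type} [NormedAddCommGroup H] [InnerProductSpace ℂ H] (M : BergmanModel α H)

theorem exists_monomial (j : ℕ) : ∃ f : H, EqOn (M.emb f) (fun z => z ^ j) unitDisk := by
  refine M.exists_rep _ (fun z _ => by fun_prop) (summable_of_ne_finset_zero (s := {j}) ?_)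
  intro k hk
  simp [tcoeff_pow, Finset.notMem_singleton.mp hk]

theorem inner_of_eqOn_pow {e : H} {j : ℕ} (he : EqOn (M.emb e) (fun z => z ^ j) unitDisk)
    (f : H) : ⟪e, f⟫_ℂ = wb2 α j * tcoeff (M.emb f) j := by
  have hcoeff (k : ℕ) : tcoeff (M.emb e) k = if k = j then 1 else 0 := by
    rw [tcoeff_congr he, tcoeff_pow]
  rw [M.inner_eq, tsum_eq_single j fun k hk => by simp [hcoeff, hk]]
  simp [hcoeff, mul_comm]

/-- The Bergman space `A_α²` as a weighted Hardy space. -/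
def toWeightedHardyModel : WeightedHardyModel H where
  emb := M.emb
  analyticOn := M.analyticOn
  inj := M.inj
  monomial j := (M.exists_monomial j).choose
  emb_monomial j := (M.exists_monomial j).choose_spec
  inner_monomial j f := by
    have he := (M.exists_monomial j).choose_spec
    have hnorm := M.inner_of_eqOn_pow he (M.exists_monomial j).choose
    rw [tcoeff_congr he, tcoeff_pow, if_pos rfl, mul_one, inner_self_eq_norm_sq_to_K] at hnorm
    rw [M.inner_of_eqOn_pow he, ← hnorm]
    rfl

end BergmanModel

namespace WeightedHardyModel

variable {H : Type*} [NormedAddCommGroup H] [InnerProductSpace ℂ H] (M : WeightedHardyModel H)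

theorem monomial_ne_zero (j : ℕ) : M.monomial j ≠ 0 := by
  intro h
  have h1 := tcoeff_congr (M.emb_monomial j) j
  rw [tcoeff_pow, if_pos rfl, h, map_zero, tcoeff_eq_zero_iff.mpr (by simp)] at h1
  exact zero_ne_one h1

theorem norm_monomial_sq_ne_zero (j : ℕ) : (‖M.monomial j‖ : ℂ) ^ 2 ≠ 0 := by
  simp [M.monomial_ne_zero j]

theorem inner_monomial_monomial (j k : ℕ) :
    ⟪M.monomial j, M.monomial k⟫_ℂ = if j = k then (‖M.monomial j‖ : ℂ) ^ 2 else 0 := by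
  rw [M.inner_monomial, tcoeff_congr (M.emb_monomial k), tcoeff_pow, mul_ite, mul_one, mul_zero]

theorem iteratedDeriv_emb_monomial (n j : ℕ) {z : ℂ} (hz : z ∈ unitDisk) :
    iteratedDeriv n (M.emb (M.monomial j)) z = j.descFactorial n * z ^ (j - n) := by
  rw [(M.emb_monomial j).iteratedDeriv_of_isOpen isOpen_unitDisk n hz, iteratedDeriv_pow]

theorem analyticOn_iteratedDeriv (n : ℕ) (f : H) :
    AnalyticOnNhd ℂ (iteratedDeriv n (M.emb f)) unitDisk := by
  rw [iteratedDeriv_eq_iterate]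
  exact (M.analyticOn f).iterated_deriv n

section Kernel

variable [CompleteSpace H]

theorem exists_evalCLM {w : ℂ} (hw : w ∈ unitDisk) : ∃ ℓ : H →L[ℂ] ℂ, ∀ f, ℓ f = M.emb f w := by
  -- Banach–Steinhaus: evaluation is the pointwise limit of the bounded functionals
  -- `f ↦ ∑ j < N, tcoeff f j * w ^ j`, so no growth condition on the weight is required.
  let partialSum (N : ℕ) : H →L[ℂ] ℂ :=
    ∑ j ∈ Finset.range N, (w ^ j / (‖M.monomial j‖ : ℂ) ^ 2) • innerSL ℂ (M.monomial j)
  have htendsto : Tendsto (fun N f => partialSum N f) atTop (𝓝 fun f => M.emb f w) := by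
    refine tendsto_pi_nhds.mpr fun f => ?_
    refine (hasSum_tcoeff_mul_pow (M.analyticOn f) hw).tendsto_sum_nat.congr fun N => ?_
    rw [sum_apply]
    refine Finset.sum_congr rfl fun j _ => ?_
    rw [smul_apply, innerSL_apply_apply, M.inner_monomial, smul_eq_mul,
      ← mul_assoc, div_mul_cancel₀ _ (M.norm_monomial_sq_ne_zero j), mul_comm]
  exact ⟨continuousLinearMapOfTendsto partialSum htendsto, fun f => rfl⟩

theorem exists_kernel {w : ℂ} (hw : w ∈ unitDisk) : ∃ k : H, ∀ f, ⟪k, f⟫_ℂ = M.emb f w := by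
  obtain ⟨ℓ, hℓ⟩ := M.exists_evalCLM hw
  exact ⟨(InnerProductSpace.toDual ℂ H).symm ℓ, fun f => by
    rw [InnerProductSpace.toDual_symm_apply, hℓ]⟩

end Kernel

theorem inner_monomial_kernel {w : ℂ} (hw : w ∈ unitDisk) {k : H}
    (hk : ∀ f, ⟪k, f⟫_ℂ = M.emb f w) (j : ℕ) : ⟪M.monomial j, k⟫_ℂ = conj w ^ j := by
  rw [← inner_conj_symm, hk, M.emb_monomial j hw, map_pow]

/-- `T` is the weighted composition–differentiation operator `D_{ψ,φ,n} f = ψ · (f⁽ⁿ⁾ ∘ φ)`. -/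
def IsWeightedCompDiff (ψ φ : ℂ → ℂ) (n : ℕ) (T : H →L[ℂ] H) : Prop :=
  ∀ f, ∀ z ∈ unitDisk, M.emb (T f) z = ψ z * iteratedDeriv n (M.emb f) (φ z)

namespace IsWeightedCompDiff

variable {M} {ψ φ : ℂ → ℂ} {n : ℕ} {T : H →L[ℂ] H}

theorem map_monomial_eq_zero (hT : M.IsWeightedCompDiff ψ φ n T)
    (hφm : MapsTo φ unitDisk unitDisk) {m : ℕ} (hm : m < n) : T (M.monomial m) = 0 := by
  refine M.inj _ _ fun z hz => ?_
  rw [hT _ z hz, M.iteratedDeriv_emb_monomial n m (hφm hz), Nat.descFactorial_of_lt hm]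
  simp

theorem emb_map_monomial_self (hT : M.IsWeightedCompDiff ψ φ n T)
    (hφm : MapsTo φ unitDisk unitDisk) :
    EqOn (M.emb (T (M.monomial n))) (fun z => n.factorial * ψ z) unitDisk := by
  intro z hz
  rw [hT _ z hz, M.iteratedDeriv_emb_monomial n n (hφm hz), Nat.descFactorial_self]
  simp [mul_comm]

theorem inner_monomial_eq_zero_of_map_eq_zero (hT : M.IsWeightedCompDiff ψ φ n T)
    (hψa : AnalyticOnNhd ℂ ψ unitDisk) (hψ0 : ∃ z ∈ unitDisk, ψ z ≠ 0)
    (hφa : AnalyticOnNhd ℂ φ unitDisk) (hφm : MapsTo φ unitDisk unitDisk)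
    (hφnc : ∃ z ∈ unitDisk, ∃ w ∈ unitDisk, φ z ≠ φ w) {g : H} (hg : T g = 0) {j : ℕ}
    (hj : n ≤ j) : ⟪M.monomial j, g⟫_ℂ = 0 := by
  have hderiv : EqOn (iteratedDeriv n (M.emb g)) 0 unitDisk :=
    eqOn_zero_of_mul_comp_eq_zero isOpen_unitDisk isPreconnected_unitDisk isPreconnected_unitDisk
      hψa hψ0 hφa hφm hφnc (M.analyticOn_iteratedDeriv n g) fun z hz => by
        rw [← hT g z hz, hg, map_zero, Pi.zero_apply]
  have hcoeff : tcoeff (M.emb g) j = 0 := tcoeff_eq_zero_iff.mpr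
    (eqOn_iteratedDeriv_zero_of_le isOpen_unitDisk hj hderiv zero_mem_unitDisk)
  rw [M.inner_monomial, hcoeff, mul_zero]

theorem monomial_mem_orthogonal_orthogonal_range (hT : M.IsWeightedCompDiff ψ φ n T)
    (hψa : AnalyticOnNhd ℂ ψ unitDisk) (hψ0 : ∃ z ∈ unitDisk, ψ z ≠ 0)
    (hφa : AnalyticOnNhd ℂ φ unitDisk) (hφm : MapsTo φ unitDisk unitDisk)
    (hφnc : ∃ z ∈ unitDisk, ∃ w ∈ unitDisk, φ z ≠ φ w) (hker : T.rangeᗮ ≤ T.ker) {j : ℕ}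
    (hj : n ≤ j) : M.monomial j ∈ T.rangeᗮᗮ :=
  (Submodule.mem_orthogonal' _ _).mpr fun _ hg =>
    hT.inner_monomial_eq_zero_of_map_eq_zero hψa hψ0 hφa hφm hφnc (hker hg) hj

theorem iteratedDeriv_multiplier_eq_zero (hT : M.IsWeightedCompDiff ψ φ n T)
    (hψa : AnalyticOnNhd ℂ ψ unitDisk) (hφm : MapsTo φ unitDisk unitDisk)
    (hker : T.ker ≤ T.rangeᗮ) {m : ℕ} (hm : m < n) : iteratedDeriv m ψ 0 = 0 := by
  have horth : ⟪M.monomial m, T (M.monomial n)⟫_ℂ = 0 :=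
    Submodule.inner_left_of_mem_orthogonal (LinearMap.mem_range_self _ _)
      (hker (hT.map_monomial_eq_zero hφm hm))
  have hcoeff : tcoeff (fun z => n.factorial * ψ z) m = 0 := by
    rw [← tcoeff_congr (hT.emb_map_monomial_self hφm)]
    simpa [M.inner_monomial, M.monomial_ne_zero m] using horth
  rw [tcoeff_eq_zero_iff, iteratedDeriv_const_mul _ (hψa 0 zero_mem_unitDisk).contDiffAt] at hcoeff
  simpa [Nat.factorial_ne_zero] using hcoeff

theorem inner_monomial_map (hT : M.IsWeightedCompDiff ψ φ n T)
    (hψa : AnalyticOnNhd ℂ ψ unitDisk) (hφa : AnalyticOnNhd ℂ φ unitDisk)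
    (hφm : MapsTo φ unitDisk unitDisk) (hlow : ∀ m < n, iteratedDeriv m ψ 0 = 0) (f : H) :
    ⟪M.monomial n, T f⟫_ℂ =
      (‖M.monomial n‖ : ℂ) ^ 2 * tcoeff ψ n * iteratedDeriv n (M.emb f) (φ 0) := by
  have hcomp : AnalyticAt ℂ (fun z => iteratedDeriv n (M.emb f) (φ z)) 0 :=
    (M.analyticOn_iteratedDeriv n f).comp hφa hφm 0 zero_mem_unitDisk
  rw [M.inner_monomial, tcoeff_congr (hT f), tcoeff, tcoeff,
    iteratedDeriv_fun_mul_of_forall_lt_eq_zero (hψa 0 zero_mem_unitDisk).contDiffAt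
      hcomp.contDiffAt hlow]
  ring

end IsWeightedCompDiff

/-- For `T = D_{ψ,φ,n}`: on the range of `T`, the vector `g` represents `c` times the functional
`f ↦ f⁽ⁿ⁾(φ w)`, that is, `T† g` is `conj c` times the kernel of the `n`-th derivative at `φ w`.
The coefficients of `g` of orders `n` and `n + 1` are required to determine `w`. -/
structure IsDerivRepresenter (φ : ℂ → ℂ) (n : ℕ) (T : H →L[ℂ] H) (w c : ℂ) (g : H) : Prop where
  inner_map : ∀ f, ⟪g, T f⟫_ℂ = c * iteratedDeriv n (M.emb f) (φ w)
  inner_monomial_ne_zero : ⟪M.monomial n, g⟫_ℂ ≠ 0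
  inner_monomial_succ : ⟪M.monomial (n + 1), g⟫_ℂ = conj w * ⟪M.monomial n, g⟫_ℂ

variable {M} {ψ φ : ℂ → ℂ} {n : ℕ} {T : H →L[ℂ] H}

theorem IsWeightedCompDiff.isDerivRepresenter_kernel (hT : M.IsWeightedCompDiff ψ φ n T) {w : ℂ}
    (hw : w ∈ unitDisk) (hw0 : w ≠ 0) {k : H} (hk : ∀ f, ⟪k, f⟫_ℂ = M.emb f w) :
    M.IsDerivRepresenter φ n T w (ψ w) k where
  inner_map f := by rw [hk, hT f w hw]
  inner_monomial_ne_zero := by simp [M.inner_monomial_kernel hw hk, hw0]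
  inner_monomial_succ := by simp only [M.inner_monomial_kernel hw hk, pow_succ']

theorem IsWeightedCompDiff.isDerivRepresenter_monomial (hT : M.IsWeightedCompDiff ψ φ n T)
    (hψa : AnalyticOnNhd ℂ ψ unitDisk) (hφa : AnalyticOnNhd ℂ φ unitDisk)
    (hφm : MapsTo φ unitDisk unitDisk) (hlow : ∀ m < n, iteratedDeriv m ψ 0 = 0) :
    M.IsDerivRepresenter φ n T 0 ((‖M.monomial n‖ : ℂ) ^ 2 * tcoeff ψ n) (M.monomial n) where
  inner_map := hT.inner_monomial_map hψa hφa hφm hlow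
  inner_monomial_ne_zero := inner_self_ne_zero.mpr (M.monomial_ne_zero n)
  inner_monomial_succ := by simp [M.inner_monomial_monomial]

namespace IsDerivRepresenter

variable {w w₁ w₂ c c₁ c₂ : ℂ} {g g₁ g₂ : H}

theorem scalar_ne_zero (hg : M.IsDerivRepresenter φ n T w c g)
    (hn : M.monomial n ∈ T.rangeᗮᗮ) : c ≠ 0 := by
  rintro rfl
  refine hg.inner_monomial_ne_zero (Submodule.inner_left_of_mem_orthogonal ?_ hn)
  rw [Submodule.mem_orthogonal']
  rintro _ ⟨f, rfl⟩
  simpa using hg.inner_map f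

theorem conj_mul_inner_eq (h₁ : M.IsDerivRepresenter φ n T w₁ c₁ g₁)
    (h₂ : M.IsDerivRepresenter φ n T w₂ c₂ g₂) (hφ : φ w₁ = φ w₂) {e : H} (he : e ∈ T.rangeᗮᗮ) :
    conj c₂ * ⟪e, g₁⟫_ℂ = conj c₁ * ⟪e, g₂⟫_ℂ := by
  have hmem : conj c₂ • g₁ - conj c₁ • g₂ ∈ T.rangeᗮ := by
    rw [Submodule.mem_orthogonal']
    rintro _ ⟨f, rfl⟩
    rw [ContinuousLinearMap.coe_coe, inner_sub_left, inner_smul_left, inner_smul_left,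
      h₁.inner_map, h₂.inner_map, hφ, conj_conj, conj_conj]
    ring
  have horth := Submodule.inner_left_of_mem_orthogonal hmem he
  rwa [inner_sub_right, inner_smul_right, inner_smul_right, sub_eq_zero] at horth

theorem eq_of_map_eq (h₁ : M.IsDerivRepresenter φ n T w₁ c₁ g₁)
    (h₂ : M.IsDerivRepresenter φ n T w₂ c₂ g₂) (hφ : φ w₁ = φ w₂)
    (hn : M.monomial n ∈ T.rangeᗮᗮ) (hsucc : M.monomial (n + 1) ∈ T.rangeᗮᗮ) : w₁ = w₂ := by
  have hcoeff := h₁.conj_mul_inner_eq h₂ hφ hn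
  have hcoeff_succ := h₁.conj_mul_inner_eq h₂ hφ hsucc
  rw [h₁.inner_monomial_succ, h₂.inner_monomial_succ] at hcoeff_succ
  have hprod : conj c₂ * ⟪M.monomial n, g₁⟫_ℂ * (conj w₁ - conj w₂) = 0 := by
    linear_combination hcoeff_succ - conj w₂ * hcoeff
  have hne : conj c₂ * ⟪M.monomial n, g₁⟫_ℂ ≠ 0 :=
    mul_ne_zero ((map_ne_zero _).mpr (h₂.scalar_ne_zero hn)) h₁.inner_monomial_ne_zero
  exact (starRingEnd ℂ).injective (sub_eq_zero.mp ((mul_eq_zero.mp hprod).resolve_left hne))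

end IsDerivRepresenter

theorem IsWeightedCompDiff.exists_isDerivRepresenter [CompleteSpace H]
    (hT : M.IsWeightedCompDiff ψ φ n T) (hψa : AnalyticOnNhd ℂ ψ unitDisk)
    (hφa : AnalyticOnNhd ℂ φ unitDisk) (hφm : MapsTo φ unitDisk unitDisk)
    (hlow : ∀ m < n, iteratedDeriv m ψ 0 = 0) {w : ℂ} (hw : w ∈ unitDisk) :
    ∃ c g, M.IsDerivRepresenter φ n T w c g := by
  rcases eq_or_ne w 0 with rfl | hw0
  · exact ⟨_, _, hT.isDerivRepresenter_monomial hψa hφa hφm hlow⟩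
  · obtain ⟨k, hk⟩ := M.exists_kernel hw
    exact ⟨_, _, hT.isDerivRepresenter_kernel hw hw0 hk⟩

end WeightedHardyModel

theorem stmt_6_general {H : Type*} [NormedAddCommGroup H] [InnerProductSpace ℂ H]
    [CompleteSpace H] (M : WeightedHardyModel H) {n : ℕ} {ψ φ : ℂ → ℂ}
    (hψa : AnalyticOnNhd ℂ ψ unitDisk) (hψ0 : ∃ z ∈ unitDisk, ψ z ≠ 0)
    (hφa : AnalyticOnNhd ℂ φ unitDisk) (hφm : MapsTo φ unitDisk unitDisk)
    (hφnc : ∃ z ∈ unitDisk, ∃ w ∈ unitDisk, φ z ≠ φ w) {T : H →L[ℂ] H}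
    (hT : M.IsWeightedCompDiff ψ φ n T) (hker : T.rangeᗮ = T.ker) :
    (∀ m < n, iteratedDeriv m ψ 0 = 0) ∧ iteratedDeriv n ψ 0 ≠ 0 ∧
      (∀ w ∈ unitDisk, w ≠ 0 → ψ w ≠ 0) ∧ InjOn φ unitDisk := by
  have hmem {j : ℕ} (hj : n ≤ j) : M.monomial j ∈ T.rangeᗮᗮ :=
    hT.monomial_mem_orthogonal_orthogonal_range hψa hψ0 hφa hφm hφnc hker.le hj
  have hlow : ∀ m < n, iteratedDeriv m ψ 0 = 0 := fun m hm =>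
    hT.iteratedDeriv_multiplier_eq_zero hψa hφm hker.ge hm
  refine ⟨hlow, fun hψn => ?_, fun w hw hw0 => ?_, fun w₁ hw₁ w₂ hw₂ hφ => ?_⟩
  · refine (hT.isDerivRepresenter_monomial hψa hφa hφm hlow).scalar_ne_zero (hmem le_rfl) ?_
    rw [tcoeff_eq_zero_iff.mpr hψn, mul_zero]
  · obtain ⟨k, hk⟩ := M.exists_kernel hw
    exact (hT.isDerivRepresenter_kernel hw hw0 hk).scalar_ne_zero (hmem le_rfl)
  · obtain ⟨c₁, g₁, h₁⟩ := hT.exists_isDerivRepresenter hψa hφa hφm hlow hw₁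
    obtain ⟨c₂, g₂, h₂⟩ := hT.exists_isDerivRepresenter hψa hφa hφm hlow hw₂
    exact h₁.eq_of_map_eq h₂ hφ (hmem le_rfl) (hmem n.le_succ)

end WeightedHardy

/-- If `D_{ψ,φ,n}` is bounded and normal on `A_α²`, then `ψ⁽ᵐ⁾(0) = 0`
for all `0 ≤ m < n`, `ψ⁽ⁿ⁾(0) ≠ 0`, `ψ(w) ≠ 0` for every `w ∈ 𝔻 \ {0}`, and `φ` is
univalent on `𝔻`. -/
theorem stmt_6 (α : ℝ) (hα : -1 < α) (n : ℕ) (hn : 1 ≤ n)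
    (H : Type) [NormedAddCommGroup H] [InnerProductSpace ℂ H] [CompleteSpace H]
    (M : BergmanModel α H)
    (ψ : ℂ → ℂ) (hψa : AnalyticOnNhd ℂ ψ unitDisk)
    (hψ0 : ∃ z ∈ unitDisk, ψ z ≠ 0)
    (φ : ℂ → ℂ) (hφa : AnalyticOnNhd ℂ φ unitDisk)
    (hφm : ∀ z ∈ unitDisk, φ z ∈ unitDisk)
    (hφnc : ∃ z ∈ unitDisk, ∃ w ∈ unitDisk, φ z ≠ φ w)
    (T : H →L[ℂ] H)
    (hT : ∀ f : H, ∀ z ∈ unitDisk,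
      M.emb (T f) z = ψ z * iteratedDeriv n (M.emb f) (φ z))
    -- `T` is normal: it commutes with its adjoint
    (hnormal : T.comp (ContinuousLinearMap.adjoint T)
      = (ContinuousLinearMap.adjoint T).comp T) :
    (∀ m < n, iteratedDeriv m ψ 0 = 0) ∧ iteratedDeriv n ψ 0 ≠ 0 ∧
      (∀ w ∈ unitDisk, w ≠ 0 → ψ w ≠ 0) ∧ Set.InjOn φ unitDisk := by
  have hTstar : IsStarNormal T := ⟨hnormal.symm⟩
  exact stmt_6_general M.toWeightedHardyModel hψa hψ0 hφa hφm hφnc hT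
    (ContinuousLinearMap.IsStarNormal.orthogonal_range hTstar)
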